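/- For contact angle γ = π/2 and any A > 0, C > 0, the dimensionless total force F has exactly one critical point in (0, π/2) and exactly one critical point in (π/2, π): there is a unique φ₁ ∈ (0, π/2) with F′(φ₁) = 0 and a unique φ₂ ∈ (π/2, π) with F′(φ₂) = 0. -/

import Mathlib

/-!
For contact angle `π / 2` the derivative of the total force at `φ = π / 2 + x` is an even function
of `x`, so the two intervals mirror each other. For `0 ≤ x ≤ π / 2` it is `2 cos x` plus nonnegative
multiples of `cos (x / 2) cos x`, `-sin (x / 2) sin x` and `cos x ^ 2`. On this range `cos` is
nonnegative and strictly decreasing while `sin` is nonnegative and increasing, so the derivative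
falls strictly from a positive value at `x = 0` to a negative value at `x = π / 2`.
-/

open Real Set

lemma existsUnique_mem_Ioo_eq_of_strictAntiOn {α δ : Type*}
    [ConditionallyCompleteLinearOrder α] [TopologicalSpace α] [OrderTopology α] [DenselyOrdered α]
    [LinearOrder δ] [TopologicalSpace δ] [OrderClosedTopology δ] {f : α → δ} {a b : α} {y : δ}
    (hab : a ≤ b) (hcont : ContinuousOn f (Icc a b)) (hanti : StrictAntiOn f (Icc a b))
    (hy : y ∈ Ioo (f b) (f a)) : ∃! x, x ∈ Ioo a b ∧ f x = y := by
  obtain ⟨x, hx, hxy⟩ := intermediate_value_Ioo' hab hcont hy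
  exact ⟨x, ⟨hx, hxy⟩, fun z ⟨hz, hzy⟩ ↦
    hanti.injOn (Ioo_subset_Icc_self hz) (Ioo_subset_Icc_self hx) (hzy.trans hxy.symm)⟩

section Trigonometric

variable {r : ℝ}

lemma mul_mem_Icc_zero_pi_div_two (hr : r ∈ Icc 0 1) {x : ℝ} (hx : x ∈ Icc 0 (π / 2)) :
    r * x ∈ Icc 0 (π / 2) :=
  ⟨mul_nonneg hr.1 hx.1, (mul_le_of_le_one_left hx.1 hr.2).trans hx.2⟩

lemma antitoneOn_cos_mul_cos (hr : r ∈ Icc 0 1) :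
    AntitoneOn (fun x ↦ cos (r * x) * cos x) (Icc 0 (π / 2)) := by
  have hanti : AntitoneOn cos (Icc 0 (π / 2)) :=
    antitoneOn_cos.mono (Icc_subset_Icc_right (half_le_self pi_nonneg))
  have hnonneg {x : ℝ} (hx : x ∈ Icc 0 (π / 2)) : 0 ≤ cos x :=
    cos_nonneg_of_neg_pi_div_two_le_of_le (by linarith [hx.1, pi_pos]) hx.2
  intro x hx y hy hxy
  have hrx := mul_mem_Icc_zero_pi_div_two hr hx
  have hry := mul_mem_Icc_zero_pi_div_two hr hy
  exact mul_le_mul (hanti hrx hry (mul_le_mul_of_nonneg_left hxy hr.1)) (hanti hx hy hxy)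
    (hnonneg hy) (hnonneg hrx)

lemma monotoneOn_sin_mul_sin (hr : r ∈ Icc 0 1) :
    MonotoneOn (fun x ↦ sin (r * x) * sin x) (Icc 0 (π / 2)) := by
  have hmono : MonotoneOn sin (Icc 0 (π / 2)) :=
    monotoneOn_sin.mono (Icc_subset_Icc_left (by linarith [pi_pos]))
  have hnonneg {x : ℝ} (hx : x ∈ Icc 0 (π / 2)) : 0 ≤ sin x :=
    sin_nonneg_of_nonneg_of_le_pi hx.1 (by linarith [hx.2, pi_pos])
  intro x hx y hy hxy
  have hrx := mul_mem_Icc_zero_pi_div_two hr hx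
  have hry := mul_mem_Icc_zero_pi_div_two hr hy
  exact mul_le_mul (hmono hrx hry (mul_le_mul_of_nonneg_left hxy hr.1)) (hmono hx hy hxy)
    (hnonneg hx) (hnonneg hry)

end Trigonometric

/-- The dimensionless total force at angle `φ`, for contact angle `γ`. -/
noncomputable def totalForce (A C γ φ : ℝ) : ℝ :=
  -A * C ^ 2 - 2 * sin (φ + γ) - 4 * C * cos ((φ + γ) / 2) * sin φ
    - (1 / 2) * C ^ 2 * sin (2 * φ) + C ^ 2 * φ

lemma hasDerivAt_totalForce (A C γ φ : ℝ) :
    HasDerivAt (totalForce A C γ)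
      (-2 * cos (φ + γ) + 2 * C * (sin ((φ + γ) / 2) * sin φ)
        - 4 * C * (cos ((φ + γ) / 2) * cos φ) + 2 * C ^ 2 * sin φ ^ 2) φ := by
  have h_shift : HasDerivAt (fun φ ↦ φ + γ) 1 φ := (hasDerivAt_id φ).add_const γ
  have h_double : HasDerivAt (fun φ : ℝ ↦ 2 * φ) 2 φ := hasDerivAt_const_mul 2
  have h_linear : HasDerivAt (fun φ ↦ C ^ 2 * φ) (C ^ 2) φ := hasDerivAt_const_mul (C ^ 2)
  have h := (((h_shift.sin.const_mul 2).const_sub (-A * C ^ 2)).sub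
    (((h_shift.div_const 2).cos.const_mul (4 * C)).mul (hasDerivAt_sin φ))).sub
    (h_double.sin.const_mul ((1 / 2) * C ^ 2)) |>.add h_linear
  refine h.congr_deriv ?_
  rw [cos_two_mul, cos_sq']
  ring

/-- The derivative of the total force for contact angle `π / 2`, as a function of the deviation
`x = φ - π / 2` from the midpoint of `(0, π)`, in which it is even. -/
noncomputable def rightAngleSlope (C x : ℝ) : ℝ :=
  2 * cos x + 2 * C * (cos (x / 2) * cos x) - 4 * C * (sin (x / 2) * sin x) + 2 * C ^ 2 * cos x ^ 2

lemma hasDerivAt_totalForce_pi_div_two (A C φ : ℝ) :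
    HasDerivAt (totalForce A C (π / 2)) (rightAngleSlope C (φ - π / 2)) φ := by
  refine (hasDerivAt_totalForce A C (π / 2) φ).congr_deriv ?_
  have h_half : (φ - π / 2) / 2 = (φ + π / 2) / 2 - π / 2 := by ring
  simp only [rightAngleSlope, h_half, cos_sub_pi_div_two, sin_sub_pi_div_two, cos_add_pi_div_two]
  ring

lemma rightAngleSlope_neg (C x : ℝ) : rightAngleSlope C (-x) = rightAngleSlope C x := by
  simp only [rightAngleSlope, neg_div, cos_neg, sin_neg, neg_mul_neg]

lemma continuous_rightAngleSlope (C : ℝ) : Continuous (rightAngleSlope C) := by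
  unfold rightAngleSlope
  fun_prop

lemma strictAntiOn_rightAngleSlope {C : ℝ} (hC : 0 ≤ C) :
    StrictAntiOn (rightAngleSlope C) (Icc 0 (π / 2)) := by
  intro x hx y hy hxy
  have h_cos : cos y < cos x := cos_lt_cos_of_nonneg_of_le_pi_div_two hx.1 hy.2 hxy
  have h_cos_half : cos (y / 2) * cos y ≤ cos (x / 2) * cos x := by
    simpa only [div_eq_inv_mul] using
      antitoneOn_cos_mul_cos (r := 2⁻¹) (by norm_num) hx hy hxy.le
  have h_sin_half : sin (x / 2) * sin x ≤ sin (y / 2) * sin y := by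
    simpa only [div_eq_inv_mul] using
      monotoneOn_sin_mul_sin (r := 2⁻¹) (by norm_num) hx hy hxy.le
  have h_cos_sq : cos y ^ 2 ≤ cos x ^ 2 := by
    simpa only [one_mul, ← sq] using
      antitoneOn_cos_mul_cos (r := 1) (by norm_num) hx hy hxy.le
  unfold rightAngleSlope
  linarith [mul_le_mul_of_nonneg_left h_cos_half hC, mul_le_mul_of_nonneg_left h_sin_half hC,
    mul_le_mul_of_nonneg_left h_cos_sq (sq_nonneg C)]

lemma rightAngleSlope_zero_pos {C : ℝ} (hC : 0 ≤ C) : 0 < rightAngleSlope C 0 := by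
  simp only [rightAngleSlope, zero_div, cos_zero, sin_zero, mul_zero, sub_zero]
  positivity

lemma rightAngleSlope_pi_div_two_neg {C : ℝ} (hC : 0 < C) : rightAngleSlope C (π / 2) < 0 := by
  have h_sin : 0 < sin (π / 2 / 2) := sin_pos_of_pos_of_lt_pi (by positivity) (by linarith [pi_pos])
  have h_eq : rightAngleSlope C (π / 2) = -(4 * C * sin (π / 2 / 2)) := by
    simp [rightAngleSlope]
  rw [h_eq]
  exact neg_neg_of_pos (by positivity)

lemma existsUnique_rightAngleSlope_eq_zero {C : ℝ} (hC : 0 < C) :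
    ∃! x, x ∈ Ioo 0 (π / 2) ∧ rightAngleSlope C x = 0 :=
  existsUnique_mem_Ioo_eq_of_strictAntiOn pi_div_two_pos.le
    (continuous_rightAngleSlope C).continuousOn (strictAntiOn_rightAngleSlope hC.le)
    ⟨rightAngleSlope_pi_div_two_neg hC, rightAngleSlope_zero_pos hC.le⟩

/-- For `γ = π/2` and any `A, C > 0`, the dimensionless total force has exactly one critical
point in `(0, π/2)` and exactly one critical point in `(π/2, π)`. -/
theorem total_force_two_critical_points (A C : ℝ) (hA : 0 < A) (hC : 0 < C)
    (F : ℝ → ℝ)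
    (hF : F = fun φ => -A * C ^ 2 - 2 * Real.sin (φ + Real.pi / 2)
      - 4 * C * Real.cos ((φ + Real.pi / 2) / 2) * Real.sin φ
      - (1 / 2) * C ^ 2 * Real.sin (2 * φ) + C ^ 2 * φ) :
    (∃! φ₁ : ℝ, φ₁ ∈ Set.Ioo (0 : ℝ) (Real.pi / 2) ∧ deriv F φ₁ = 0) ∧
    (∃! φ₂ : ℝ, φ₂ ∈ Set.Ioo (Real.pi / 2) Real.pi ∧ deriv F φ₂ = 0) := by
  have hderiv (φ : ℝ) : deriv F φ = rightAngleSlope C (φ - π / 2) :=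
    hF ▸ (hasDerivAt_totalForce_pi_div_two A C φ).deriv
  have hzero := existsUnique_rightAngleSlope_eq_zero hC
  constructor
  · refine ((Equiv.subLeft (π / 2)).existsUnique_congr fun φ ↦ ?_).mpr hzero
    have hmem : φ ∈ Ioo 0 (π / 2) ↔ π / 2 - φ ∈ Ioo 0 (π / 2) := by simp [and_comm]
    rw [Equiv.subLeft_apply, hmem, hderiv, ← neg_sub, rightAngleSlope_neg]
  · refine ((Equiv.subRight (π / 2)).existsUnique_congr fun φ ↦ ?_).mpr hzero
    have hmem : φ ∈ Ioo (π / 2) π ↔ φ - π / 2 ∈ Ioo 0 (π / 2) := by simp [sub_lt_iff_lt_add]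
    rw [Equiv.subRight_apply, hmem, hderiv]
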